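/- Suppose Γ is regular and let m ≥ 1. Then the girth of Γ (the minimum length of a cycle in Γ) equals 2m+1 if and only if α_0 = α_1 = ⋯ = α_{m−1} = 0, α_m ≠ 0, and γ_1 = γ_2 = ⋯ = γ_m = 1. -/

import Mathlib

/-!
The proof compares the predistance polynomials of a connected `k`-regular graph with the
nonbacktracking polynomials `F_0 = 1`, `F_1 = x`, `F_2 = x² - k`,
`F_{i+2} = x F_{i+1} - (k - 1) F_i` (`nbPoly`).

Since the graph is regular, `λ_0 = k` (`lam_zero_eq`), and `⟨f, g⟩` is, up to the factor `1/n`, the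
sum of the entrywise products of `f(A)` and `g(A)` (`ip_eq_sum`), while `f(λ_0)` is, up to the same
factor, the sum of the entries of `f(A)` (`sum_aeval`).

If there is no cycle of length at most `2s`, then `F_i(A)` is the distance-`i` matrix for all
`i ≤ s` (`aeval_nbPoly`). Distance matrices are orthogonal `0/1` matrices, so uniqueness of the
predistance polynomials gives `p_i = F_i` for `i ≤ s` (`IsPredistance.eq_nbPoly`). Hence `γ_i = 1`
for `1 ≤ i ≤ s`, and `α_s ≠ 0` exactly when some edge has both ends at distance `s` from a common
vertex (`IsPredistance.alph_ne_zero_iff`), which means that there is a cycle of length `2s + 1`.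
This settles the forward direction.

For the converse, one shows by induction on `s` that there are no cycles of length at most `2s` for
`s ≤ t` (`IsPredistance.noCyc_step`). Suppose this holds for `s`, and let `α_s = 0` and
`γ_{s+1} = 1`. The first condition excludes cycles of length `2s + 1`; then `F_{s+1}(A)` is
supported on the pairs `(u, v)` at distance `s + 1`, with entry the number `c(u, v) ≥ 1` of
neighbours of `u` at distance `s` from `v`. Thus `F_{s+1}` is orthogonal to the earlier `p_j`, and
`F_{s+1} = γ_{s+1} p_{s+1} = p_{s+1}`. The normalization of `p_{s+1}` reads `Σ c² = Σ c`, so every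
`c(u, v)` is `1`, which excludes cycles of length `2s + 2`.
-/

open Polynomial Finset

/-- The scalar product `⟨f,g⟩_Γ = (1/n)·Σ_{i=0}^d m_i f(λ_i) g(λ_i)`. -/
noncomputable def ip (n d : ℕ) (m : ℕ → ℕ) (lam : ℕ → ℝ) (f g : Polynomial ℝ) : ℝ :=
  (n : ℝ)⁻¹ * ∑ i ∈ Finset.range (d + 1), (m i : ℝ) * f.eval (lam i) * g.eval (lam i)

/-- The preintersection numbers `ξ_{ij}^h = ⟨p_i p_j, p_h⟩ / ⟨p_h, p_h⟩`. -/
noncomputable def xi (n d : ℕ) (m : ℕ → ℕ) (lam : ℕ → ℝ) (p : ℕ → Polynomial ℝ)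
    (i j h : ℕ) : ℝ :=
  ip n d m lam (p i * p j) (p h) / ip n d m lam (p h) (p h)

/-- `α_i = ξ_{1,i}^i`. -/
noncomputable def alph (n d : ℕ) (m : ℕ → ℕ) (lam : ℕ → ℝ) (p : ℕ → Polynomial ℝ)
    (i : ℕ) : ℝ :=
  xi n d m lam p 1 i i

/-- `β_i = ξ_{1,i+1}^i` for `i < d`, with the convention `β_d = 0`. -/
noncomputable def bet (n d : ℕ) (m : ℕ → ℕ) (lam : ℕ → ℝ) (p : ℕ → Polynomial ℝ)
    (i : ℕ) : ℝ :=
  if i < d then xi n d m lam p 1 (i + 1) i else 0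

/-- `γ_i = ξ_{1,i-1}^i` for `1 ≤ i`, with the convention `γ_0 = 0`. -/
noncomputable def gam (n d : ℕ) (m : ℕ → ℕ) (lam : ℕ → ℝ) (p : ℕ → Polynomial ℝ)
    (i : ℕ) : ℝ :=
  if 1 ≤ i then xi n d m lam p 1 (i - 1) i else 0

section helpers

open SimpleGraph

/-! ### Short cycles and distances -/

/-- Every cycle is longer than `L`. -/
def NoCyc {V : Type} (G : SimpleGraph V) (L : ℕ) : Prop :=
  ∀ (a : V) (c : G.Walk a a), c.IsCycle → L < c.length

/-- If the edges in a list span a subgraph that is not a forest, the graph has a cycle no longer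
than the list. -/
lemma exists_cycle_of_edge_list {V : Type} [DecidableEq V] {G : SimpleGraph V} (S : List (Sym2 V))
    (hS : ∀ e ∈ S, e ∈ G.edgeSet) (h : ¬ (fromEdgeSet {e | e ∈ S}).IsAcyclic) :
    ∃ (a : V) (c : G.Walk a a), c.IsCycle ∧ c.length ≤ S.length := by
  have hle : fromEdgeSet {e | e ∈ S} ≤ G := by
    intro a b hab
    rw [fromEdgeSet_adj] at hab
    exact hS _ hab.1
  simp only [IsAcyclic, not_forall, not_not] at h
  obtain ⟨a, c, hc⟩ := h
  refine ⟨a, c.mapLe hle, hc.mapLe hle, ?_⟩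
  have hnd := hc.isTrail.edges_nodup
  have hsub : c.edges ⊆ S := by
    intro e he
    have := c.edges_subset_edgeSet he
    rw [edgeSet_fromEdgeSet] at this
    exact this.1
  simpa using (hnd.subperm hsub).length_le

lemma mem_edgeSet_fromEdgeSet {V : Type} {G : SimpleGraph V} {S : List (Sym2 V)}
    {u v : V} (p : G.Walk u v) (hp : p.edges ⊆ S) :
    ∀ e ∈ p.edges, e ∈ (fromEdgeSet {e | e ∈ S}).edgeSet := by
  intro e he
  rw [edgeSet_fromEdgeSet]
  exact ⟨hp he, G.not_isDiag_of_mem_edgeSet (p.edges_subset_edgeSet he)⟩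

/-- In a forest paths are unique, so the edges of two distinct paths with the same ends contain
a cycle. -/
lemma exists_cycle_of_two_paths {V : Type} [DecidableEq V] {G : SimpleGraph V} {u v : V}
    (p q : G.Walk u v) (hp : p.IsPath) (hq : q.IsPath) (hne : p ≠ q) :
    ∃ (a : V) (c : G.Walk a a), c.IsCycle ∧ c.length ≤ p.length + q.length := by
  have := exists_cycle_of_edge_list (G := G) (p.edges ++ q.edges) (by
    intro e he
    rcases List.mem_append.1 he with he | he
    · exact p.edges_subset_edgeSet he
    · exact q.edges_subset_edgeSet he) (by
    intro hac
    have h1 := mem_edgeSet_fromEdgeSet (S := p.edges ++ q.edges) p (by simp)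
    have h2 := mem_edgeSet_fromEdgeSet (S := p.edges ++ q.edges) q (by simp)
    have := (hac.subsingleton_path u v).elim ⟨p.transfer _ h1, hp.transfer h1⟩
      ⟨q.transfer _ h2, hq.transfer h2⟩
    apply hne
    apply Walk.ext_support
    have := congrArg (fun r => r.1.support) this
    simpa using this)
  simpa using this

/-- A closed walk of odd length forces a cycle no longer than itself: the subgraph of its edges is
not bipartite, hence not a forest. -/
lemma exists_cycle_of_odd {V : Type} [DecidableEq V] {G : SimpleGraph V} {u : V}
    (p : G.Walk u u) (hp : Odd p.length) :
    ∃ (a : V) (c : G.Walk a a), c.IsCycle ∧ c.length ≤ p.length := by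
  have := exists_cycle_of_edge_list (G := G) p.edges (fun e he => p.edges_subset_edgeSet he) (by
    intro hac
    have h1 := mem_edgeSet_fromEdgeSet (S := p.edges) p (by simp)
    have := two_colorable_iff_forall_loop_even.1 hac.colorable_two u (p.transfer _ h1)
    rw [Walk.length_transfer] at this
    exact (Nat.not_even_iff_odd.2 hp) this)
  simpa using this

/-- An edge with both ends at distance `i` from `v` closes up to an odd walk of length `2i + 1`. -/
lemma NoCyc.dist_ne {V : Type} [DecidableEq V] {G : SimpleGraph V} (hG : G.Connected)
    {i : ℕ} (h : NoCyc G (2 * i + 1)) {u w v : V} (huw : G.Adj u w)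
    (hu : G.dist u v = i) : G.dist w v ≠ i := by
  intro hw
  obtain ⟨p, hp⟩ := hG.exists_walk_length_eq_dist u v
  obtain ⟨q, hq⟩ := hG.exists_walk_length_eq_dist w v
  obtain ⟨a, c, hc, hl⟩ := exists_cycle_of_odd (Walk.cons huw (q.append p.reverse))
    ⟨i, by simp; omega⟩
  have := h a c hc
  simp at hl
  omega

/-- Two neighbours of `u` closer to `v` give two geodesics from `u` to `v`, hence a cycle of length
at most twice the distance. -/
lemma NoCyc.eq_of_closer {V : Type} [DecidableEq V] {G : SimpleGraph V} (hG : G.Connected)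
    {i : ℕ} (h : NoCyc G (2 * (i + 1))) {u w w' v : V} (huw : G.Adj u w) (huw' : G.Adj u w')
    (hu : G.dist u v = i + 1) (hw : G.dist w v = i) (hw' : G.dist w' v = i) : w = w' := by
  by_contra hne
  obtain ⟨p, hp⟩ := hG.exists_walk_length_eq_dist w v
  obtain ⟨q, hq⟩ := hG.exists_walk_length_eq_dist w' v
  obtain ⟨a, c, hc, hl⟩ := exists_cycle_of_two_paths (Walk.cons huw p) (Walk.cons huw' q)
    (Walk.isPath_of_length_eq_dist _ (by simp; omega))
    (Walk.isPath_of_length_eq_dist _ (by simp; omega)) (by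
      intro he
      have := congrArg (fun r => r.getVert 1) he
      simp at this
      exact hne this)
  have := h a c hc
  simp at hl
  omega

/-- A cycle that is as short as possible is isometric in its first half: a shortcut together with
the initial arc would contain a cycle of length at most `L`. -/
lemma NoCyc.dist_getVert {V : Type} [DecidableEq V] {G : SimpleGraph V} (hG : G.Connected)
    {L : ℕ} (h : NoCyc G L) {a : V} (c : G.Walk a a) (hc : c.IsCycle) {i : ℕ}
    (hi : 2 * i ≤ L + 1) : G.dist a (c.getVert i) = i := by
  have hL := h a c hc
  have h3 := hc.three_le_length
  have hlen : (c.take i).length = i := by rw [Walk.take_length]; omega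
  have hle : G.dist a (c.getVert i) ≤ i := by
    have := G.dist_le (c.take i)
    omega
  by_contra hne
  obtain ⟨q, hq, hql⟩ := hG.exists_path_of_dist a (c.getVert i)
  obtain ⟨b, c', hc', hl⟩ := exists_cycle_of_two_paths (c.take i) q
    (hc.isPath_take (by omega)) hq (by rintro rfl; omega)
  have := h b c' hc'
  omega

/-- A shortest cycle of length `2s + 1` yields an edge equidistant from the opposite vertex. -/
lemma exists_of_odd_cycle {V : Type} [DecidableEq V] {G : SimpleGraph V} (hG : G.Connected)
    {s : ℕ} (h : NoCyc G (2 * s)) {a : V} (c : G.Walk a a) (hc : c.IsCycle)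
    (hl : c.length = 2 * s + 1) :
    ∃ u w v, G.Adj u w ∧ G.dist u v = s ∧ G.dist w v = s := by
  refine ⟨c.getVert s, c.getVert (s + 1), a, c.adj_getVert_succ (by omega), ?_, ?_⟩
  · rw [dist_comm, h.dist_getVert hG c hc (by omega)]
  · have := h.dist_getVert hG c.reverse hc.reverse (i := s) (by omega)
    rw [Walk.getVert_reverse] at this
    rw [dist_comm]
    convert this using 3
    omega

/-- A shortest cycle of length `2s + 2` yields a vertex with two neighbours closer to the opposite
vertex. -/
lemma exists_of_even_cycle {V : Type} [DecidableEq V] {G : SimpleGraph V} (hG : G.Connected)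
    {s : ℕ} (h : NoCyc G (2 * s + 1)) {a : V} (c : G.Walk a a) (hc : c.IsCycle)
    (hl : c.length = 2 * s + 2) :
    ∃ u w w' v, G.Adj u w ∧ G.Adj u w' ∧ w ≠ w' ∧ G.dist u v = s + 1 ∧
      G.dist w v = s ∧ G.dist w' v = s := by
  have h3 := hc.three_le_length
  refine ⟨c.getVert (s + 1), c.getVert s, c.getVert (s + 2), a,
    (c.adj_getVert_succ (by omega)).symm, c.adj_getVert_succ (by omega), ?_, ?_, ?_, ?_⟩
  · exact hc.getVert_sub_one_ne_getVert_add_one (i := s + 1) (by omega)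
  · rw [dist_comm, h.dist_getVert hG c hc (by omega)]
  · rw [dist_comm, h.dist_getVert hG c hc (by omega)]
  · have := h.dist_getVert hG c.reverse hc.reverse (i := s) (by omega)
    rw [Walk.getVert_reverse] at this
    rw [dist_comm]
    convert this using 3
    omega


/-! ### Nonbacktracking polynomials and distance matrices -/

/-- The distance-`i` matrix of the graph. It is the `0/1` matrix marking pairs with
`G.dist u v = i`; on a disconnected graph, unreachable pairs are marked for `i = 0`, since
`G.dist` is `0` there. -/
noncomputable def distMat {V : Type} (G : SimpleGraph V) (i : ℕ) : Matrix V V ℝ :=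
  Matrix.of fun u v => if G.dist u v = i then 1 else 0

/-- The number of neighbours of `u` at distance `i` from `v`. -/
noncomputable def nbr {V : Type} [Fintype V] (G : SimpleGraph V) [DecidableRel G.Adj]
    (u v : V) (i : ℕ) : ℕ := #{w ∈ G.neighborFinset u | G.dist w v = i}

/-- The monic polynomials `F_i` which, at the adjacency matrix of a `k`-regular graph, count
nonbacktracking walks of length `i`. The recurrence subtracts `k F_0` in the first step and
`(k - 1) F_i` afterwards. -/
noncomputable def nbPoly (k : ℕ) : ℕ → ℝ[X]
  | 0 => 1
  | 1 => X
  | i + 2 => X * nbPoly k (i + 1) - C (if i = 0 then (k : ℝ) else k - 1) * nbPoly k i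

lemma nbPoly_monic (k i : ℕ) : (nbPoly k i).Monic ∧ (nbPoly k i).natDegree = i := by
  induction i using Nat.strong_induction_on with
  | _ i ih =>
    match i with
    | 0 => simp [nbPoly]
    | 1 => simp [nbPoly, monic_X]
    | i + 2 =>
      obtain ⟨h1, h1'⟩ := ih (i + 1) (by omega)
      obtain ⟨h0, h0'⟩ := ih i (by omega)
      have hm : (X * nbPoly k (i + 1)).Monic := monic_X.mul h1
      have hd : (X * nbPoly k (i + 1)).natDegree = i + 2 := by
        rw [monic_X.natDegree_mul h1, h1', natDegree_X]; omega
      have hlt : (C (if i = 0 then (k : ℝ) else k - 1) * nbPoly k i).natDegree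
          < (X * nbPoly k (i + 1)).natDegree := by
        have := natDegree_C_mul_le (if i = 0 then (k : ℝ) else k - 1) (nbPoly k i)
        omega
      rw [nbPoly]
      refine ⟨hm.sub_of_left (degree_lt_degree hlt), ?_⟩
      rw [natDegree_sub_eq_left_of_natDegree_lt hlt, hd]

set_option linter.unusedSectionVars false

section graph
variable {V : Type} [Fintype V] [DecidableEq V] {G : SimpleGraph V} [DecidableRel G.Adj]

lemma distMat_zero (hG : G.Connected) : distMat G 0 = 1 := by
  ext u v
  simp [distMat, Matrix.one_apply, hG.dist_eq_zero_iff]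

lemma distMat_one : distMat G 1 = G.adjMatrix ℝ := by
  ext u v
  simp [distMat, dist_eq_one_iff_adj]

lemma adj_mul_distMat (u v : V) (i : ℕ) : (G.adjMatrix ℝ * distMat G i) u v = nbr G u v i := by
  simp [adjMatrix_mul_apply, distMat, nbr]

lemma nbr_eq_zero (u v : V) (i : ℕ) (h : ∀ w, G.Adj u w → G.dist w v ≠ i) : nbr G u v i = 0 := by
  simp only [nbr, card_eq_zero, filter_eq_empty_iff, mem_neighborFinset]
  exact fun w hw => h w hw

lemma dist_adj (u v w : V) (h : G.Adj u w) :
    G.dist w v = G.dist u v ∨ G.dist w v = G.dist u v + 1 ∨ G.dist w v = G.dist u v - 1 := by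
  have := h.diff_dist_adj (u := v)
  rwa [dist_comm (u := v), dist_comm (u := v)] at this

lemma exists_closer (hG : G.Connected) {u v : V} {i : ℕ} (h : G.dist u v = i + 1) :
    ∃ w, G.Adj u w ∧ G.dist w v = i := by
  obtain ⟨p, hp⟩ := hG.exists_walk_length_eq_dist u v
  cases p with
  | nil => simp at h
  | @cons _ w _ hw q =>
    refine ⟨w, hw, ?_⟩
    have h1 := G.dist_le q
    have h2 := dist_adj u v w hw
    simp at hp
    omega

lemma nbr_pos (hG : G.Connected) {u v : V} {i : ℕ} (h : G.dist u v = i + 1) :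
    0 < nbr G u v i := by
  obtain ⟨w, hw, hd⟩ := exists_closer hG h
  exact card_pos.2 ⟨w, by simp [hw, hd]⟩

lemma nbr_eq_one (hG : G.Connected) {u v : V} {i : ℕ} (hc : NoCyc G (2 * (i + 1)))
    (h : G.dist u v = i + 1) : nbr G u v i = 1 := by
  refine le_antisymm ?_ (nbr_pos hG h)
  rw [nbr, card_le_one]
  intro a ha b hb
  simp at ha hb
  exact hc.eq_of_closer hG ha.1 hb.1 h ha.2 hb.2

lemma NoCyc.mono {L M : ℕ} (h : NoCyc G L) (hle : M ≤ L) : NoCyc G M :=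
  fun a c hc => lt_of_le_of_lt hle (h a c hc)

lemma nbr_sum {k : ℕ} (hreg : G.IsRegularOfDegree k) (u v : V) (i : ℕ)
    (h : G.dist u v = i + 1) : nbr G u v i + nbr G u v (i + 1) + nbr G u v (i + 2) = k := by
  have hk := hreg u
  rw [← card_neighborFinset_eq_degree] at hk
  rw [← hk, nbr, nbr, nbr, ← card_union_of_disjoint, ← card_union_of_disjoint]
  · congr 1
    ext w
    simp only [mem_union, mem_filter, mem_neighborFinset]
    constructor
    · tauto
    · intro hw
      have := dist_adj u v w hw
      have : G.dist w v = i ∨ G.dist w v = i + 1 ∨ G.dist w v = i + 2 := by omega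
      tauto
  · rw [Finset.disjoint_left]
    intro w
    simp only [mem_union, mem_filter, mem_neighborFinset]
    omega
  · rw [Finset.disjoint_left]
    intro w
    simp only [mem_filter, mem_neighborFinset]
    omega

/-- Without cycles of length at most `2s + 3`, the recurrence step applied to the distance matrices
of indices `s + 1` and `s` is supported on pairs at distance `s + 2`, and counts closer
neighbours there. -/
lemma step_matrix (hG : G.Connected) {k : ℕ} (hreg : G.IsRegularOfDegree k) (s : ℕ)
    (hc : NoCyc G (2 * (s + 1) + 1)) (u v : V) :
    (G.adjMatrix ℝ * distMat G (s + 1) -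
      (if s = 0 then (k : ℝ) else k - 1) • distMat G s) u v
      = if G.dist u v = s + 2 then (nbr G u v (s + 1) : ℝ) else 0 := by
  rw [Matrix.sub_apply, adj_mul_distMat, Matrix.smul_apply]
  simp only [distMat, Matrix.of_apply, smul_eq_mul]
  by_cases h2 : G.dist u v = s + 2
  · simp [h2]
  rw [if_neg h2]
  by_cases h0 : G.dist u v = s
  · rw [if_pos h0]
    rcases s with _ | s
    · have huv : u = v := hG.dist_eq_zero_iff.1 h0
      subst huv
      have : nbr G u u (0 + 1) = k := by
        rw [nbr, ← hreg u, ← card_neighborFinset_eq_degree]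
        congr 1
        ext w
        simp [dist_eq_one_iff_adj, G.adj_comm w u]
      simp [this]
    · have h1 := nbr_eq_one hG (hc.mono (by omega)) h0
      have h3 : nbr G u v (s + 1) = 0 := nbr_eq_zero u v _ fun w hw =>
        (hc.mono (by omega)).dist_ne hG hw h0
      have := nbr_sum hreg u v s h0
      rw [h1, h3] at this
      rw [← this]
      push_cast
      simp
  · rw [if_neg h0]
    simp only [mul_zero, sub_zero, Nat.cast_eq_zero]
    apply nbr_eq_zero
    intro w hw hd
    have hda := dist_adj u v w hw
    have h1 : G.dist u v = s + 1 := by omega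
    exact hc.dist_ne hG hw h1 hd

lemma aeval_nbPoly_succ (k s : ℕ) (M : Matrix V V ℝ) : aeval M (nbPoly k (s + 2)) =
    M * aeval M (nbPoly k (s + 1)) - (if s = 0 then (k : ℝ) else k - 1) • aeval M (nbPoly k s) := by
  rw [nbPoly, map_sub, map_mul, map_mul, aeval_X, aeval_C, ← Algebra.smul_def]

/-- In the absence of cycles of length at most `2s`, the only nonbacktracking walks of length `s` are
geodesics, one for each pair at distance `s`. -/
lemma aeval_nbPoly (hG : G.Connected) {k : ℕ} (hreg : G.IsRegularOfDegree k) (s : ℕ)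
    (hc : NoCyc G (2 * s)) : aeval (G.adjMatrix ℝ) (nbPoly k s) = distMat G s := by
  induction s using Nat.strong_induction_on with
  | _ s ih =>
    match s with
    | 0 => simp [nbPoly, distMat_zero hG]
    | 1 => simp [nbPoly, distMat_one]
    | s + 2 =>
      rw [aeval_nbPoly_succ, ih (s + 1) (by omega) (hc.mono (by omega)),
        ih s (by omega) (hc.mono (by omega))]
      ext u v
      rw [step_matrix hG hreg s (hc.mono (by omega))]
      simp only [distMat, Matrix.of_apply]
      split_ifs with h
      · rw [nbr_eq_one hG hc h]; simp
      · rfl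

/-- Under the weaker hypothesis that allows cycles of length `2(s + 2)`, the value of the
nonbacktracking polynomial of index `s + 2` counts the neighbours one step closer. -/
lemma aeval_nbPoly_apply (hG : G.Connected) {k : ℕ} (hreg : G.IsRegularOfDegree k) (s : ℕ)
    (hc : NoCyc G (2 * (s + 1) + 1)) (u v : V) :
    aeval (G.adjMatrix ℝ) (nbPoly k (s + 2)) u v
      = if G.dist u v = s + 2 then (nbr G u v (s + 1) : ℝ) else 0 := by
  rw [aeval_nbPoly_succ, aeval_nbPoly hG hreg _ (hc.mono (by omega)),
    aeval_nbPoly hG hreg _ (hc.mono (by omega)), step_matrix hG hreg s hc]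

lemma aeval_apply_comm (f : ℝ[X]) (u v : V) :
    aeval (G.adjMatrix ℝ) f u v = aeval (G.adjMatrix ℝ) f v u := by
  have h : (aeval (G.adjMatrix ℝ) f).IsSymm := by
    induction f using Polynomial.induction_on' with
    | add p q hp hq => rw [map_add]; exact hp.add hq
    | monomial n a =>
      rw [aeval_monomial, ← Algebra.smul_def]
      exact ((G.isSymm_adjMatrix (α := ℝ)).pow n).smul a
  exact h.apply v u

/-- All row sums of `f(A)` equal `f(k)`, the all-ones vector being an eigenvector for `k`. -/
lemma sum_aeval {k : ℕ} (hreg : G.IsRegularOfDegree k) (f : ℝ[X]) :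
    ∑ u, ∑ v, aeval (G.adjMatrix ℝ) f u v = Fintype.card V * f.eval (k : ℝ) := by
  have h : ∀ f : ℝ[X], ∀ u, ∑ v, aeval (G.adjMatrix ℝ) f u v = f.eval (k : ℝ) := by
    intro f
    induction f using Polynomial.induction_on with
    | C a =>
      intro u
      simp [aeval_C, Matrix.algebraMap_matrix_apply]
    | add p q hp hq =>
      intro u
      simp [sum_add_distrib, hp u, hq u]
    | monomial n a ih =>
      intro u
      have e : (C a * X ^ (n + 1) : ℝ[X]) = X * (C a * X ^ n) := by ring
      rw [e, map_mul, aeval_X]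
      simp_rw [adjMatrix_mul_apply]
      rw [sum_comm]
      simp_rw [ih]
      simp [hreg u]
  simp_rw [h]
  simp

end graph


/-! ### The scalar product and orthogonal polynomials -/
section algebra
variable {V : Type} [Fintype V] [DecidableEq V] {G : SimpleGraph V} [DecidableRel G.Adj]
  {n d : ℕ} {lam : ℕ → ℝ} {m : ℕ → ℕ} {p : ℕ → ℝ[X]} {k : ℕ}

lemma ip_comm (f g : ℝ[X]) : ip n d m lam f g = ip n d m lam g f := by
  simp only [ip]
  congr 1
  exact sum_congr rfl fun i _ => by ring

lemma ip_add_left (f f' g : ℝ[X]) :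
    ip n d m lam (f + f') g = ip n d m lam f g + ip n d m lam f' g := by
  simp only [ip, eval_add, ← mul_add, ← sum_add_distrib]
  congr 1
  exact sum_congr rfl fun i _ => by ring

lemma ip_C_mul_left (c : ℝ) (f g : ℝ[X]) :
    ip n d m lam (C c * f) g = c * ip n d m lam f g := by
  simp only [ip, eval_mul, eval_C, mul_sum]
  exact sum_congr rfl fun i _ => by ring

lemma ip_sub_left (f f' g : ℝ[X]) :
    ip n d m lam (f - f') g = ip n d m lam f g - ip n d m lam f' g := by
  rw [eq_sub_iff_add_eq, ← ip_add_left, sub_add_cancel]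

lemma ip_sum_left {ι : Type} (s : Finset ι) (f : ι → ℝ[X]) (g : ℝ[X]) :
    ip n d m lam (∑ i ∈ s, f i) g = ∑ i ∈ s, ip n d m lam (f i) g := by
  classical
  induction s using Finset.induction_on with
  | empty => simp [ip]
  | insert a s ha ih => rw [sum_insert ha, sum_insert ha, ip_add_left, ih]

/-- The trace of `h(A)` is the sum of `h` over the eigenvalues, by diagonalizing `A`. -/
lemma trace_aeval_hermitian {A : Matrix V V ℝ} (hA : A.IsHermitian) (h : ℝ[X]) :
    (aeval A h).trace = (A.charpoly.roots.map fun x => h.eval x).sum := by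
  rw [hA.roots_charpoly_eq_eigenvalues, Multiset.map_map]
  change _ = ∑ i, _
  conv_lhs => rw [hA.spectral_theorem]
  rw [show ∀ D : Matrix V V ℝ, aeval (Unitary.conjStarAlgAut ℝ _ hA.eigenvectorUnitary D) h
    = Unitary.conjStarAlgAut ℝ _ hA.eigenvectorUnitary (aeval D h) from fun D =>
      aeval_algHom_apply (Unitary.conjStarAlgAut ℝ _ hA.eigenvectorUnitary :
        Matrix V V ℝ ≃⋆ₐ[ℝ] Matrix V V ℝ).toAlgEquiv.toAlgHom D h]
  rw [Unitary.conjStarAlgAut_apply, Matrix.trace_mul_comm, ← mul_assoc]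
  rw [show Matrix.diagonal (RCLike.ofReal ∘ hA.eigenvalues) =
    Matrix.diagonalAlgHom ℝ (RCLike.ofReal ∘ hA.eigenvalues) from rfl, aeval_algHom_apply]
  simp [Matrix.trace, aeval_pi_apply]

lemma trace_aeval {A : Matrix V V ℝ} (hA : A.IsHermitian)
    (hchar : A.charpoly = ∏ i ∈ Finset.range (d + 1), (X - C (lam i)) ^ m i) (h : ℝ[X]) :
    (aeval A h).trace = ∑ i ∈ Finset.range (d + 1), m i * h.eval (lam i) := by
  rw [trace_aeval_hermitian hA, hchar, roots_prod _ _ (by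
    rw [prod_ne_zero_iff]
    exact fun i _ => pow_ne_zero _ (X_sub_C_ne_zero _))]
  simp only [roots_pow, roots_X_sub_C, Multiset.map_bind, Multiset.sum_bind, Multiset.map_nsmul,
    Multiset.sum_nsmul, Multiset.map_singleton, Multiset.sum_singleton, nsmul_eq_mul]
  rfl

/-- The scalar product is `1/n` times the trace of `f(A) g(A)`, hence, `g(A)` being symmetric,
`1/n` times the sum of entrywise products. -/
lemma ip_eq_sum (hchar : (G.adjMatrix ℝ).charpoly =
      ∏ i ∈ Finset.range (d + 1), (X - C (lam i)) ^ m i) (f g : ℝ[X]) :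
    ip n d m lam f g = (n : ℝ)⁻¹ * ∑ u, ∑ v, aeval (G.adjMatrix ℝ) f u v *
      aeval (G.adjMatrix ℝ) g u v := by
  have hA : (G.adjMatrix ℝ).IsHermitian := by
    simp [Matrix.IsHermitian]
  have := trace_aeval hA hchar (f * g)
  rw [ip]
  congr 1
  simp only [eval_mul, ← mul_assoc] at this
  rw [← this, map_mul, Matrix.trace]
  simp only [Matrix.diag_apply, Matrix.mul_apply]
  refine sum_congr rfl fun u _ => sum_congr rfl fun v _ => ?_
  rw [aeval_apply_comm g u v]

/-- The largest eigenvalue of a regular graph is its degree: the upper bound is the Gershgorin circle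
theorem, and the all-ones vector is an eigenvector for `k`. -/
lemma lam_zero_eq (hG : G.Connected) (hchar : (G.adjMatrix ℝ).charpoly =
      ∏ i ∈ Finset.range (d + 1), (X - C (lam i)) ^ m i)
    (hlam : ∀ i j : ℕ, i < j → j ≤ d → lam j < lam i) (hm0 : m 0 = 1)
    (hreg : G.IsRegularOfDegree k) : lam 0 = k := by
  have hne := hG.nonempty
  apply le_antisymm
  · have h0 : Module.End.HasEigenvalue (Matrix.toLin' (G.adjMatrix ℝ)) (lam 0) := by
      rw [Module.End.hasEigenvalue_iff_isRoot_charpoly, Matrix.charpoly_toLin', hchar, IsRoot,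
        eval_prod]
      exact prod_eq_zero (i := 0) (by simp) (by simp [hm0])
    obtain ⟨u, hu⟩ := eigenvalue_mem_ball h0
    have e : ∑ j ∈ univ.erase u, ‖G.adjMatrix ℝ u j‖ = k := by
      have h1 : ∑ j, ‖G.adjMatrix ℝ u j‖ = k := by
        rw [← hreg u, ← card_neighborFinset_eq_degree, neighborFinset_eq_filter]
        simp [adjMatrix_apply, apply_ite]
      rw [← h1, sum_erase]
      simp
    rw [e] at hu
    simp only [adjMatrix_apply, SimpleGraph.irrefl, if_false, Metric.mem_closedBall,
      Real.dist_eq, sub_zero] at hu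
    exact (le_abs_self _).trans hu
  · have hk : IsRoot (G.adjMatrix ℝ).charpoly (k : ℝ) := by
      rw [← Matrix.charpoly_toLin', ← Module.End.hasEigenvalue_iff_isRoot_charpoly]
      apply Module.End.hasEigenvalue_of_hasEigenvector (x := fun _ => (1 : ℝ))
      refine ⟨?_, ?_⟩
      · rw [Module.End.mem_eigenspace_iff]
        ext u
        simp [Matrix.toLin'_apply, adjMatrix_mulVec_apply, hreg u]
      · intro h
        have := congrFun h hne.some
        simp at this
    rw [hchar, IsRoot, eval_prod, prod_eq_zero_iff] at hk
    obtain ⟨i, hi, he⟩ := hk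
    rw [eval_pow] at he
    have he := eq_zero_of_pow_eq_zero he
    simp [sub_eq_zero] at he
    rw [he]
    rcases Nat.eq_zero_or_pos i with rfl | hpos
    · rfl
    · exact (hlam 0 i hpos (by simp at hi; omega)).le

/-- The scalar product is definite on polynomials of degree at most `d`, which are determined by
their values at the `d + 1` distinct eigenvalues. -/
lemma eq_zero_of_ip_self (hn : 0 < n) (hlam : ∀ i j : ℕ, i < j → j ≤ d → lam j < lam i)
    (hmpos : ∀ i ≤ d, 0 < m i) (f : ℝ[X]) (hf : f.natDegree ≤ d) (h : ip n d m lam f f = 0) :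
    f = 0 := by
  have hn' : (n : ℝ)⁻¹ ≠ 0 := by positivity
  rw [ip, mul_eq_zero, or_iff_right hn', sum_eq_zero_iff_of_nonneg (fun i _ => by
    rw [mul_assoc]; exact mul_nonneg (by positivity) (mul_self_nonneg _))] at h
  have hinj : Set.InjOn lam (Finset.range (d + 1)) := by
    intro i hi j hj he
    simp at hi hj
    rcases lt_trichotomy i j with hlt | rfl | hlt
    · have := hlam i j hlt (by omega); linarith
    · rfl
    · have := hlam j i hlt (by omega); linarith
  apply eq_zero_of_natDegree_lt_card_of_eval_eq_zero' f ((Finset.range (d + 1)).image lam)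
  · intro x hx
    obtain ⟨i, hi, rfl⟩ := mem_image.1 hx
    have := h i hi
    have hm := hmpos i (by simp at hi; omega)
    rw [mul_assoc, mul_eq_zero] at this
    rcases this with h1 | h1
    · exact absurd h1 (by positivity)
    · exact mul_self_eq_zero.1 h1
  · rw [card_image_of_injOn hinj, card_range]
    omega

lemma exists_expansion (hdeg : ∀ i ≤ d, (p i).degree = (i : ℕ)) (N : ℕ) (hN : N ≤ d + 1)
    (f : ℝ[X]) (hf : f.degree < N) :
    ∃ a : ℕ → ℝ, f = ∑ j ∈ Finset.range N, C (a j) * p j := by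
  induction N generalizing f with
  | zero =>
    refine ⟨0, ?_⟩
    have : f = 0 := by
      by_contra h
      rw [degree_eq_natDegree h] at hf
      simp at hf
    simpa using this
  | succ N ih =>
    have hp := hdeg N (by omega)
    have hp0 : p N ≠ 0 := by rintro h; simp [h] at hp
    have hnat : (p N).natDegree = N := natDegree_eq_of_degree_eq_some hp
    have hlc : (p N).coeff N ≠ 0 := by
      have := leadingCoeff_ne_zero.2 hp0
      rwa [leadingCoeff, hnat] at this
    set b := f.coeff N / (p N).coeff N with hb
    obtain ⟨a, ha⟩ := ih (by omega) (f - C b * p N) (by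
      rw [degree_lt_iff_coeff_zero]
      intro j hj
      rw [coeff_sub, coeff_C_mul]
      rcases hj.eq_or_lt with rfl | hlt
      · rw [hb, div_mul_cancel₀ _ hlc, sub_self]
      · rw [coeff_eq_zero_of_natDegree_lt (p := p N) (by omega), mul_zero, sub_zero]
        exact coeff_eq_zero_of_degree_lt (hf.trans_le (by exact_mod_cast hlt)))
    refine ⟨fun j => if j = N then b else a j, ?_⟩
    simp only [sum_range_succ, if_true]
    rw [← sub_eq_iff_eq_add, ha]
    refine sum_congr rfl fun j hj => ?_
    rw [if_neg (by simp at hj; omega)]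

/-- Uniqueness of orthogonal polynomials up to scaling. -/
lemma eq_smul_of_orth (hn : 0 < n) (hlam : ∀ i j : ℕ, i < j → j ≤ d → lam j < lam i)
    (hmpos : ∀ i ≤ d, 0 < m i) (hdeg : ∀ i ≤ d, (p i).degree = (i : ℕ))
    (horth : ∀ i ≤ d, ∀ j ≤ d, i ≠ j → ip n d m lam (p i) (p j) = 0)
    {i : ℕ} (hi : i ≤ d) (q : ℝ[X]) (hq : q.Monic) (hqd : q.natDegree = i)
    (ho : ∀ j < i, ip n d m lam q (p j) = 0) : ∃ c : ℝ, c ≠ 0 ∧ q = C c * p i := by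
  obtain ⟨a, ha⟩ := exists_expansion hdeg (i + 1) (by omega) q (by
    rw [degree_eq_natDegree hq.ne_zero, hqd]; exact_mod_cast Nat.lt_succ_self i)
  rw [sum_range_succ] at ha
  have hr : q - C (a i) * p i = 0 := by
    apply eq_zero_of_ip_self hn hlam hmpos
    · refine (natDegree_sub_le _ _).trans ?_
      have := natDegree_C_mul_le (a i) (p i)
      have := natDegree_eq_of_degree_eq_some (hdeg i hi)
      omega
    · conv_lhs => arg 5; rw [ha, add_sub_cancel_right]
      rw [ip_sum_left]
      apply sum_eq_zero
      intro j hj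
      have hj : j < i := by simpa using hj
      rw [ip_C_mul_left, ip_comm, ip_sub_left, ho j hj, ip_C_mul_left,
        horth i hi j (by omega) (by omega)]
      simp
  rw [sub_eq_zero] at hr
  refine ⟨a i, ?_, hr⟩
  intro h0
  rw [h0] at hr
  exact hq.ne_zero (by simpa using hr)

end algebra


/-! ### Predistance polynomials of a regular graph -/

/-- `G` is a connected `k`-regular graph on `n` vertices with distinct eigenvalues
`lam 0 > ⋯ > lam d` of multiplicities `m i`, and `p 0, …, p d` are its predistance polynomials.
The values of `lam`, `m` and `p` beyond index `d` are irrelevant. -/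
structure IsPredistance {V : Type} [Fintype V] [DecidableEq V] (G : SimpleGraph V)
    [DecidableRel G.Adj] (n d k : ℕ) (m : ℕ → ℕ) (lam : ℕ → ℝ) (p : ℕ → ℝ[X]) : Prop where
  conn : G.Connected
  reg : G.IsRegularOfDegree k
  card : Fintype.card V = n
  char : (G.adjMatrix ℝ).charpoly = ∏ i ∈ Finset.range (d + 1), (X - C (lam i)) ^ m i
  anti : ∀ i j : ℕ, i < j → j ≤ d → lam j < lam i
  mult_zero : m 0 = 1
  mult_pos : ∀ i ≤ d, 0 < m i
  deg : ∀ i ≤ d, (p i).degree = (i : ℕ)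
  orth : ∀ i ≤ d, ∀ j ≤ d, i ≠ j → ip n d m lam (p i) (p j) = 0
  norm : ∀ i ≤ d, ip n d m lam (p i) (p i) = (p i).eval (lam 0)

namespace IsPredistance
variable {V : Type} [Fintype V] [DecidableEq V] {G : SimpleGraph V} [DecidableRel G.Adj]
  {n d : ℕ} {lam : ℕ → ℝ} {m : ℕ → ℕ} {p : ℕ → ℝ[X]} {k : ℕ}

lemma n_pos (H : IsPredistance G n d k m lam p) : 0 < n := by
  have := H.conn.nonempty
  rw [← H.card]
  exact Fintype.card_pos

lemma ip_self_ne_zero (H : IsPredistance G n d k m lam p) {i : ℕ} (hi : i ≤ d) :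
    ip n d m lam (p i) (p i) ≠ 0 := by
  intro h
  have hd := H.deg i hi
  have := eq_zero_of_ip_self H.n_pos H.anti H.mult_pos (p i)
    (by rw [natDegree_eq_of_degree_eq_some hd]; exact hi) h
  simp [this] at hd

/-- The normalization `⟨f, f⟩ = f(λ_0)` says that the squares of the entries of `f(A)` have the same
sum as the entries themselves. -/
lemma ip_self_eq_eval_iff (H : IsPredistance G n d k m lam p) (f : ℝ[X]) :
    ip n d m lam f f = f.eval (lam 0) ↔
      ∑ u, ∑ v, aeval (G.adjMatrix ℝ) f u v * aeval (G.adjMatrix ℝ) f u v =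
      ∑ u, ∑ v, aeval (G.adjMatrix ℝ) f u v := by
  have hn : (n : ℝ) ≠ 0 := by exact_mod_cast H.n_pos.ne'
  rw [ip_eq_sum H.char, sum_aeval H.reg, H.card,
    lam_zero_eq H.conn H.char H.anti H.mult_zero H.reg, inv_mul_eq_iff_eq_mul₀ hn]

/-- As long as there is no cycle shorter than `2s`, the matrix `F_s(A)` is supported on pairs at
distance `s`, so `F_s` is orthogonal to the earlier predistance polynomials. -/
lemma exists_scalar (H : IsPredistance G n d k m lam p) {s : ℕ} (hs : s ≤ d)
    (hp : ∀ j < s, p j = nbPoly k j) (hc : NoCyc G (2 * s - 1)) :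
    ∃ c : ℝ, c ≠ 0 ∧ nbPoly k s = C c * p s := by
  refine eq_smul_of_orth H.n_pos H.anti H.mult_pos H.deg H.orth hs _ (nbPoly_monic k s).1
    (nbPoly_monic k s).2 fun j hj => ?_
  rw [hp j hj, ip_eq_sum H.char, aeval_nbPoly H.conn H.reg j (hc.mono (by omega))]
  refine mul_eq_zero_of_right _ (sum_eq_zero fun u _ => sum_eq_zero fun v _ => ?_)
  by_cases hd : G.dist u v = j
  · have h0 : aeval (G.adjMatrix ℝ) (nbPoly k s) u v = 0 := by
      match s with
      | 0 => omega
      | 1 =>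
        have : G.dist u v ≠ 1 := by omega
        simpa [nbPoly, dist_eq_one_iff_adj] using this
      | s + 2 =>
        rw [aeval_nbPoly_apply H.conn H.reg s (hc.mono (by omega)), if_neg (by omega)]
    rw [h0, zero_mul]
  · simp [distMat, hd]

/-- The matrix `F_s(A)` is a `0/1` matrix, so `F_s` satisfies the normalization and the scalar of
`exists_scalar` is `1`. -/
lemma eq_nbPoly (H : IsPredistance G n d k m lam p) {s : ℕ} (hs : s ≤ d)
    (hc : NoCyc G (2 * s)) : p s = nbPoly k s := by
  induction s using Nat.strong_induction_on with
  | _ s ih =>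
    obtain ⟨c, hc0, hF⟩ := H.exists_scalar hs
      (fun j hj => ih j hj (by omega) (hc.mono (by omega))) (hc.mono (by omega))
    have h1 : ip n d m lam (nbPoly k s) (nbPoly k s) = (nbPoly k s).eval (lam 0) := by
      rw [H.ip_self_eq_eval_iff, aeval_nbPoly H.conn H.reg s hc]
      refine sum_congr rfl fun u _ => sum_congr rfl fun v _ => ?_
      simp only [distMat, Matrix.of_apply]
      split_ifs <;> simp
    have h2 := H.norm s hs
    have h3 := H.ip_self_ne_zero hs
    rw [hF, ip_C_mul_left, ip_comm, ip_C_mul_left, eval_mul, eval_C, ← h2] at h1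
    have : c = 1 := by
      have h4 := mul_left_cancel₀ hc0 h1
      exact mul_right_cancel₀ h3 (by rw [h4, one_mul])
    rw [hF, this, C_1, one_mul]

lemma noCyc_two (G : SimpleGraph V) : NoCyc G 2 := fun _ _ hc => hc.three_le_length

/-- The number `γ_{s+1}` is the scalar relating `F_{s+1}` to `p_{s+1}`, because `x p_s` and `F_{s+1}`
differ by a polynomial orthogonal to `p_{s+1}`. -/
lemma gam_eq (H : IsPredistance G n d k m lam p) {s : ℕ} (hs : s + 1 ≤ d)
    (hp : ∀ j ≤ s, p j = nbPoly k j) {c : ℝ} (hF : nbPoly k (s + 1) = C c * p (s + 1)) :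
    gam n d m lam p (s + 1) = c := by
  have hp1 : p 1 = X := H.eq_nbPoly (s := 1) (by omega) (noCyc_two G)
  have hne := H.ip_self_ne_zero hs
  rw [gam, if_pos (by omega), xi, div_eq_iff hne, hp1, Nat.add_sub_cancel, ← ip_C_mul_left, ← hF,
    hp s le_rfl]
  rcases s with _ | s
  · simp [nbPoly]
  · rw [nbPoly, ip_sub_left, ip_C_mul_left, ← hp s (by omega), H.orth s (by omega) _ hs (by omega)]
    simp

/-- Up to a nonzero factor, `α_s` counts the triples `(u, w, v)` with `u` adjacent to `w` and both at
distance `s` from `v`. -/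
lemma alph_ne_zero_iff (H : IsPredistance G n d k m lam p) (hd : 1 ≤ d) {s : ℕ} (hs : s ≤ d)
    (hc : NoCyc G (2 * s)) : alph n d m lam p s ≠ 0 ↔
      ∃ u w v, G.Adj u w ∧ G.dist u v = s ∧ G.dist w v = s := by
  have hn : (n : ℝ)⁻¹ ≠ 0 := inv_ne_zero (by exact_mod_cast H.n_pos.ne')
  have hp1 : p 1 = X := H.eq_nbPoly (s := 1) (by omega) (noCyc_two G)
  have hne := H.ip_self_ne_zero hs
  rw [alph, xi, Ne, div_eq_zero_iff, or_iff_left hne, hp1, H.eq_nbPoly hs hc, ip_eq_sum H.char,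
    map_mul, aeval_X, aeval_nbPoly H.conn H.reg s hc, mul_eq_zero, or_iff_right hn,
    sum_eq_zero_iff_of_nonneg]
  · constructor
    · intro h
      by_contra! hcon
      apply h
      intro u _
      apply sum_eq_zero
      intro v _
      by_cases hd : G.dist u v = s
      · rw [adj_mul_distMat, nbr_eq_zero u v s fun w hw => hcon u w v hw hd]
        simp
      · simp [distMat, hd]
    · rintro ⟨u, w, v, hw, hu, hwv⟩ h
      have := h u (mem_univ _)
      rw [sum_eq_zero_iff_of_nonneg] at this
      · have := this v (mem_univ _)
        rw [adj_mul_distMat] at this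
        simp only [distMat, Matrix.of_apply, hu, if_true, mul_one, Nat.cast_eq_zero, nbr,
          Finset.card_eq_zero] at this
        exact notMem_empty w (this ▸ by simp [hw, hwv])
      · intro v _
        rw [adj_mul_distMat]
        simp only [distMat, Matrix.of_apply]
        positivity
  · intro u _
    apply sum_nonneg
    intro v _
    rw [adj_mul_distMat]
    simp only [distMat, Matrix.of_apply]
    positivity

/-- The induction step of the converse direction: `α_{s+1} = 0` excludes cycles of length `2s + 3`,
and then `γ_{s+2} = 1` excludes cycles of length `2s + 4`. -/
lemma noCyc_step (H : IsPredistance G n d k m lam p) {s : ℕ} (hs : s + 2 ≤ d)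
    (hc : NoCyc G (2 * (s + 1))) (ha : alph n d m lam p (s + 1) = 0)
    (hg : gam n d m lam p (s + 2) = 1) : NoCyc G (2 * (s + 2)) := by
  have hodd : NoCyc G (2 * (s + 1) + 1) := by
    intro a c hcyc
    have := hc a c hcyc
    by_contra hle
    exact (H.alph_ne_zero_iff (by omega) (by omega) hc).2
      (exists_of_odd_cycle H.conn hc c hcyc (by omega)) ha
  have hp : ∀ j ≤ s + 1, p j = nbPoly k j := fun j hj =>
    H.eq_nbPoly (by omega) (hc.mono (by omega))
  obtain ⟨c, -, hF⟩ := H.exists_scalar hs (fun j hj => hp j (by omega)) (hodd.mono (by omega))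
  rw [← H.gam_eq hs hp hF, hg, C_1, one_mul] at hF
  have hnorm := H.norm (s + 2) hs
  rw [← hF, H.ip_self_eq_eval_iff] at hnorm
  simp only [aeval_nbPoly_apply H.conn H.reg s hodd] at hnorm
  have hle : ∀ u v : V, (if G.dist u v = s + 2 then (nbr G u v (s + 1) : ℝ) else 0) ≤
      (if G.dist u v = s + 2 then (nbr G u v (s + 1) : ℝ) else 0) *
      (if G.dist u v = s + 2 then (nbr G u v (s + 1) : ℝ) else 0) := by
    intro u v
    split_ifs with h
    · exact_mod_cast Nat.le_mul_self _
    · simp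
  -- the sums of `c` and of `c²` agree and `c ≤ c²` termwise, so `c = c²` everywhere
  have hone : ∀ u v : V, G.dist u v = s + 2 → nbr G u v (s + 1) ≤ 1 := by
    intro u v huv
    have h1 := (sum_eq_sum_iff_of_le fun u _ => sum_le_sum fun v _ => hle u v).1 hnorm.symm u
      (mem_univ _)
    have h2 := (sum_eq_sum_iff_of_le fun v _ => hle u v).1 h1 v (mem_univ _)
    rw [if_pos huv] at h2
    have h3 : nbr G u v (s + 1) = nbr G u v (s + 1) * nbr G u v (s + 1) := by exact_mod_cast h2
    by_contra hlt
    nlinarith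
  intro a c hcyc
  have := hodd a c hcyc
  by_contra hlen
  obtain ⟨u, w, w', v, hw, hw', hne, hu, hwd, hwd'⟩ :=
    exists_of_even_cycle H.conn hodd c hcyc (by omega)
  exact hne (card_le_one.1 (hone u v hu) w (by simp [hw, hwd]) w' (by simp [hw', hwd']))

/-- A positive girth is not the junk value `0` given to forests, so it is attained by a cycle. -/
lemma girth_eq_iff (G : SimpleGraph V) (L : ℕ) :
    G.girth = L + 1 ↔ NoCyc G L ∧ ∃ (a : V) (c : G.Walk a a), c.IsCycle ∧ c.length = L + 1 := by
  constructor
  · intro h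
    have hac : ¬ G.IsAcyclic := by
      rw [← girth_eq_zero]; omega
    obtain ⟨a, c, hc, hl⟩ := exists_girth_eq_length.2 hac
    refine ⟨fun b c' hc' => ?_, a, c, hc, by omega⟩
    have := girth_le_length hc'
    omega
  · rintro ⟨hno, a, c, hc, hl⟩
    have hle := girth_le_length hc
    obtain ⟨b, c', hc', hl'⟩ := exists_girth_eq_length.2 fun hac : G.IsAcyclic => hac c hc
    have := hno b c' hc'
    omega

end IsPredistance

end helpers

theorem stmt_16
    (V : Type) [Fintype V] [DecidableEq V] (G : SimpleGraph V) [DecidableRel G.Adj]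
    (hconn : G.Connected) (n d : ℕ) (hn : Fintype.card V = n)
    (lam : ℕ → ℝ) (m : ℕ → ℕ)
    (hchar : (G.adjMatrix ℝ).charpoly =
      ∏ i ∈ Finset.range (d + 1), (Polynomial.X - Polynomial.C (lam i)) ^ m i)
    (hlam : ∀ i j : ℕ, i < j → j ≤ d → lam j < lam i)
    (hm0 : m 0 = 1) (hmpos : ∀ i ≤ d, 0 < m i)
    (p : ℕ → Polynomial ℝ)
    (hdeg : ∀ i ≤ d, (p i).degree = (i : ℕ))
    (horth : ∀ i ≤ d, ∀ j ≤ d, i ≠ j → ip n d m lam (p i) (p j) = 0)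
    (hnorm : ∀ i ≤ d, ip n d m lam (p i) (p i) = (p i).eval (lam 0))
    (k : ℕ) (hreg : G.IsRegularOfDegree k) (t : ℕ) (ht : 1 ≤ t) (htd : t ≤ d) :
    G.girth = 2 * (t : ℕ∞) + 1 ↔
      (∀ i < t, alph n d m lam p i = 0) ∧ alph n d m lam p t ≠ 0 ∧
      (∀ i, 1 ≤ i → i ≤ t → gam n d m lam p i = 1) := by
  have H : IsPredistance G n d k m lam p :=
    ⟨hconn, hreg, hn, hchar, hlam, hm0, hmpos, hdeg, horth, hnorm⟩
  have hcast : ((G.girth : ℕ∞) = 2 * (t : ℕ∞) + 1) ↔ G.girth = 2 * t + 1 := by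
    exact_mod_cast Iff.rfl
  rw [hcast, IsPredistance.girth_eq_iff]
  constructor
  · rintro ⟨hno, a, c, hc, hl⟩
    refine ⟨fun i hi => ?_, ?_, fun i hi hit => ?_⟩
    · by_contra hne
      obtain ⟨u, w, v, hw, hu, hwv⟩ :=
        (H.alph_ne_zero_iff (by omega) (by omega) (hno.mono (by omega))).1 hne
      exact (hno.mono (by omega)).dist_ne hconn hw hu hwv
    · exact (H.alph_ne_zero_iff (by omega) htd hno).2 (exists_of_odd_cycle hconn hno c hc hl)
    · obtain ⟨i, rfl⟩ := Nat.exists_eq_add_of_le' hi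
      apply H.gam_eq (by omega) fun j hj => H.eq_nbPoly (by omega) (hno.mono (by omega))
      rw [H.eq_nbPoly (by omega) (hno.mono (by omega)), C_1, one_mul]
  · rintro ⟨ha, hat, hg⟩
    have hno : ∀ s, s + 1 ≤ t → NoCyc G (2 * (s + 1)) := by
      intro s
      induction s with
      | zero => exact fun _ => IsPredistance.noCyc_two G
      | succ s ih =>
        intro hs
        exact H.noCyc_step (by omega) (ih (by omega)) (ha _ (by omega)) (hg _ (by omega) hs)
    have hnot : NoCyc G (2 * t) := by
      have := hno (t - 1) (by omega)
      rwa [Nat.sub_add_cancel ht] at this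
    refine ⟨hnot, ?_⟩
    obtain ⟨u, w, v, hw, hu, hwv⟩ := (H.alph_ne_zero_iff (by omega) htd hnot).1 hat
    by_contra! hcon
    have hno' : NoCyc G (2 * t + 1) := by
      intro a c hc
      have h1 := hnot a c hc
      have h2 := hcon a c hc
      omega
    exact hno'.dist_ne hconn hw hu hwv
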